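/- (Proposition 4, part) If n ≥ 1 and p ≥ 1, then a point (a,c) ∈ ℝ × (0,∞) is a critical point of s (i.e., the total derivative of s vanishes at (a,c), equivalently ∂s/∂a = −4pa/c = 0 and ∂s/∂c = 2(n + pa² − pc²)/c² = 0) if and only if a = 0 and c = √(n/p). Hence the critical metric g(0, √(n/p)) is the unique metric in the family with I(a,c)-Hermitian Ricci tensor. -/

import Mathlib

/-- The scalar curvature `s(a,c) = 4n(1 + n - 1/(2c)) + 4p(1 + p - (a²+c²)/(2c))` of the
family of invariant metrics `g(a,c)` on `S^{2n+1} × S^{2p+1}`, as a function of the point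
`(a, c) ∈ ℝ × (0,∞)`. -/
noncomputable def s (n p : ℕ) : ℝ × ℝ → ℝ := fun x =>
  4 * n * (1 + (n : ℝ) - 1 / (2 * x.2)) + 4 * p * (1 + (p : ℝ) - (x.1 ^ 2 + x.2 ^ 2) / (2 * x.2))

open ContinuousLinearMap (fst snd)

lemma hasFDerivAt_div {𝕜 E : Type*} [NontriviallyNormedField 𝕜] [NormedAddCommGroup E]
    [NormedSpace 𝕜 E] {f g : E → 𝕜} {f' g' : E →L[𝕜] 𝕜} {x : E} (hf : HasFDerivAt f f' x)
    (hg : HasFDerivAt g g' x) (hx : g x ≠ 0) :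
    HasFDerivAt (fun y ↦ f y / g y) ((1 / g x) • f' - (f x / g x ^ 2) • g') x :=
  (hf.hasMFDerivAt.div hg.hasMFDerivAt hx).hasFDerivAt

lemma smul_fst_add_smul_snd_eq_zero_iff {R : Type*} [CommSemiring R] [TopologicalSpace R]
    [IsTopologicalSemiring R] {u v : R} : u • fst R R R + v • snd R R R = 0 ↔ u = 0 ∧ v = 0 := by
  refine ⟨fun h ↦ ⟨?_, ?_⟩, fun ⟨hu, hv⟩ ↦ by ext <;> simp [hu, hv]⟩
  · simpa using DFunLike.congr_fun h (1, 0)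
  · simpa using DFunLike.congr_fun h (0, 1)

lemma eq_sqrt_div_iff_mul_sq_eq {x y c : ℝ} (hy : y ≠ 0) (hc : 0 < c) :
    c = √(x / y) ↔ y * c ^ 2 = x := by
  rw [eq_comm, Real.sqrt_eq_iff_mul_self_eq_of_pos hc, eq_div_iff hy, mul_comm, ← sq]

section ScalarCurvature

variable (n p : ℕ) (a : ℝ) {c : ℝ}

lemma hasFDerivAt_s (hc : c ≠ 0) :
    HasFDerivAt (s n p)
      ((-4 * p * a / c) • fst ℝ ℝ ℝ + (2 * (n + p * a ^ 2 - p * c ^ 2) / c ^ 2) • snd ℝ ℝ ℝ)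
      (a, c) := by
  have h_fst : HasFDerivAt (fun x : ℝ × ℝ ↦ x.1) (fst ℝ ℝ ℝ) (a, c) := hasFDerivAt_fst
  have h_snd : HasFDerivAt (fun x : ℝ × ℝ ↦ x.2) (snd ℝ ℝ ℝ) (a, c) := hasFDerivAt_snd
  have h_two_snd : HasFDerivAt (fun x : ℝ × ℝ ↦ 2 * x.2) ((2 : ℝ) • snd ℝ ℝ ℝ) (a, c) :=
    h_snd.const_mul 2
  have h_ne : 2 * c ≠ 0 := mul_ne_zero two_ne_zero hc
  have h_inv : HasFDerivAt (fun x : ℝ × ℝ ↦ 1 / (2 * x.2))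
      (-(1 / (2 * c ^ 2)) • snd ℝ ℝ ℝ) (a, c) := by
    refine (hasFDerivAt_div (hasFDerivAt_const 1 _) h_two_snd h_ne).congr_fderiv ?_
    match_scalars
    field_simp
  have h_quot : HasFDerivAt (fun x : ℝ × ℝ ↦ (x.1 ^ 2 + x.2 ^ 2) / (2 * x.2))
      ((a / c) • fst ℝ ℝ ℝ + ((c ^ 2 - a ^ 2) / (2 * c ^ 2)) • snd ℝ ℝ ℝ) (a, c) := by
    refine (hasFDerivAt_div ((h_fst.pow 2).fun_add (h_snd.pow 2)) h_two_snd h_ne).congr_fderiv ?_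
    match_scalars <;> field_simp <;> ring
  refine (((h_inv.const_sub _).const_mul _).fun_add
    ((h_quot.const_sub _).const_mul _)).congr_fderiv ?_
  match_scalars <;> field_simp
  ring

lemma hasFDerivAt_s_zero_iff (hc : c ≠ 0) :
    HasFDerivAt (s n p) (0 : ℝ × ℝ →L[ℝ] ℝ) (a, c) ↔
      -4 * p * a / c = 0 ∧ 2 * (n + p * a ^ 2 - p * c ^ 2) / c ^ 2 = 0 := by
  rw [← smul_fst_add_smul_snd_eq_zero_iff]
  have hs := hasFDerivAt_s n p a hc
  exact ⟨hs.unique, hs.congr_fderiv⟩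

end ScalarCurvature

/-- Proposition 4 (part): if `n ≥ 1` and `p ≥ 1`, then `(a,c) ∈ ℝ × (0,∞)` is a critical
point of `s` (the total derivative of `s` vanishes at `(a,c)`, equivalently
`∂s/∂a = -4pa/c = 0` and `∂s/∂c = 2(n + pa² - pc²)/c² = 0`) if and only if `a = 0` and
`c = √(n/p)`.  Hence the critical metric `g(0, √(n/p))` is the unique metric in the family
with `I(a,c)`-Hermitian Ricci tensor. -/
theorem stmt18 (n p : ℕ) (hn : 1 ≤ n) (hp : 1 ≤ p) :
    ∀ a c : ℝ, 0 < c →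
      (HasFDerivAt (s n p) (0 : ℝ × ℝ →L[ℝ] ℝ) (a, c) ↔
        a = 0 ∧ c = Real.sqrt ((n : ℝ) / p)) := by
  intro a c hc
  have hp₀ : (p : ℝ) ≠ 0 := Nat.cast_ne_zero.mpr (Nat.one_le_iff_ne_zero.mp hp)
  have h_fst : -4 * p * a / c = 0 ↔ a = 0 := by simp [hp₀, hc.ne']
  have h_snd : 2 * (n + p * a ^ 2 - p * c ^ 2) / c ^ 2 = 0 ↔ n + p * a ^ 2 = p * c ^ 2 := by
    simp [hc.ne', sub_eq_zero]
  rw [hasFDerivAt_s_zero_iff n p a hc.ne', h_fst, h_snd, eq_sqrt_div_iff_mul_sq_eq hp₀ hc]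
  refine and_congr_right fun ha ↦ ?_
  simp [ha, eq_comm]
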